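/- arXiv:2404.03059 — 6 statements merged into one kernel-verified Lean document; each statement's English description precedes it below -/
import Mathlib

section
/- Let q ≥ 1, let Ψ be a q×q real matrix and ℰ ∈ ℝ^q a vector with c := ℰᵀΨℰ > 0. Write a := Ψℰ ∈ ℝ^q and assume a_k ≠ 0 for every k ∈ {1,…,q}, and that both index sets {k : a_k > 0} and {k : a_k < 0} are nonempty. For w ∈ ℝ^q set u := ℰᵀw and v := w − (1/c)·a·(ℰᵀw), so that w = (a/c)·u + v. Then every component of w is strictly positive if and only if I₁ < u < I₂, where I₁ := −min_{k : a_k > 0} (c/a_k)·v_k and I₂ := −max_{k : a_k < 0} (c/a_k)·v_k. -/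
/-!
Write `a = Ψℰ`, `c = ℰᵀΨℰ` and `u = ℰᵀw`. For every `k`,
`(c / a k) * v k = c * w k / a k - u`, so `-u < (c / a k) * v k` says `0 < w k` when
`0 < a k`, and `(c / a k) * v k < -u` says `0 < w k` when `a k < 0`. Since the index sets are
finite and nonempty, the minimum and the maximum are attained, so the two bounds on `u` hold
iff these inequalities hold for all `k` in the respective index set; as no `a k` vanishes,
the two sets together exhaust all indices.
-/

open Matrix

theorem lt_ciInf_iff_of_finite {ι : Type*} [Finite ι] [Nonempty ι] (f : ι → ℝ) (x : ℝ) :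
    x < ⨅ i, f i ↔ ∀ i, x < f i := by
  constructor
  · intro h i
    exact h.trans_le (ciInf_le (Set.finite_range f).bddBelow i)
  · intro h
    obtain ⟨i, hi⟩ := exists_eq_ciInf_of_finite (f := f)
    exact hi ▸ h i

theorem ciSup_lt_iff_of_finite {ι : Type*} [Finite ι] [Nonempty ι] (f : ι → ℝ) (x : ℝ) :
    ⨆ i, f i < x ↔ ∀ i, f i < x := by
  constructor
  · intro h i
    exact (le_ciSup (Set.finite_range f).bddAbove i).trans_lt h
  · intro h
    obtain ⟨i, hi⟩ := exists_eq_ciSup_of_finite (f := f)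
    exact hi ▸ h i

/-- Characterization of the conditioning event: all components of `w` are strictly
positive iff `I₁ < ℰᵀw < I₂`, where `w = (Ψℰ/c)·(ℰᵀw) + v`. -/
theorem stmt_0 (q : ℕ) (hq : 1 ≤ q) (Ψ : Matrix (Fin q) (Fin q) ℝ) (ℰ : Fin q → ℝ)
    (hc : 0 < ℰ ⬝ᵥ Ψ.mulVec ℰ)
    (ha : ∀ k, Ψ.mulVec ℰ k ≠ 0)
    (hpos : ∃ k, 0 < Ψ.mulVec ℰ k) (hneg : ∃ k, Ψ.mulVec ℰ k < 0)
    (w : Fin q → ℝ) :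
    (∀ k, 0 < w k) ↔
      (-(⨅ k : {k : Fin q // 0 < Ψ.mulVec ℰ k},
            ((ℰ ⬝ᵥ Ψ.mulVec ℰ) / Ψ.mulVec ℰ k) *
              (w - ((ℰ ⬝ᵥ Ψ.mulVec ℰ)⁻¹ * (ℰ ⬝ᵥ w)) • Ψ.mulVec ℰ) k)
          < ℰ ⬝ᵥ w ∧
        ℰ ⬝ᵥ w <
          -(⨆ k : {k : Fin q // Ψ.mulVec ℰ k < 0},
            ((ℰ ⬝ᵥ Ψ.mulVec ℰ) / Ψ.mulVec ℰ k) *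
              (w - ((ℰ ⬝ᵥ Ψ.mulVec ℰ)⁻¹ * (ℰ ⬝ᵥ w)) • Ψ.mulVec ℰ) k)) := by
  have : Nonempty {k : Fin q // 0 < Ψ.mulVec ℰ k} := let ⟨k, hk⟩ := hpos; ⟨⟨k, hk⟩⟩
  have : Nonempty {k : Fin q // Ψ.mulVec ℰ k < 0} := let ⟨k, hk⟩ := hneg; ⟨⟨k, hk⟩⟩
  rw [neg_lt, lt_neg, lt_ciInf_iff_of_finite, ciSup_lt_iff_of_finite]
  have key : ∀ k, ((ℰ ⬝ᵥ Ψ.mulVec ℰ) / Ψ.mulVec ℰ k) *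
      (w - ((ℰ ⬝ᵥ Ψ.mulVec ℰ)⁻¹ * (ℰ ⬝ᵥ w)) • Ψ.mulVec ℰ) k
      = (ℰ ⬝ᵥ Ψ.mulVec ℰ) / Ψ.mulVec ℰ k * w k - ℰ ⬝ᵥ w := by
    intro k
    have hk := ha k
    have hc' := hc.ne'
    simp only [Pi.sub_apply, Pi.smul_apply, smul_eq_mul]
    field_simp
  simp only [key, neg_lt_sub_iff_lt_add, sub_lt_iff_lt_add, neg_add_cancel, lt_add_iff_pos_right,
    Subtype.forall]
  constructor
  · intro h
    exact ⟨fun k hk => mul_pos (div_pos hc hk) (h k),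
      fun k hk => mul_neg_of_neg_of_pos (div_neg_of_pos_of_neg hc hk) (h k)⟩
  · rintro ⟨h₁, h₂⟩ k
    rcases (ha k).lt_or_gt with hk | hk
    · exact (neg_iff_pos_of_mul_neg (h₂ k hk)).mp (div_neg_of_pos_of_neg hc hk)
    · exact (pos_iff_pos_of_mul_pos (h₁ k hk)).mp (div_pos hc hk)
end

section
/- There exist constants C₀, C₁, C₂, C₃ ≥ 0 depending only on p, Ω, Q and 𝕄 (in particular, not on L, I₁, I₂) such that for all coordinate directions i₁, i₂, i₃ ∈ {1,…,p}, all z ∈ ℝ^p, all L ∈ ℝ^p, and all −∞ < I₁ < I₂ ≤ ∞, the third-order partial derivative of W₀ satisfies |∂³W₀(z)/∂z_{i₁}∂z_{i₂}∂z_{i₃}| ≤ Σ_{l=0}^{3} C_l · ‖𝕄z + L‖^l · exp(−½(𝕄z + L)ᵀΘ(𝕄z + L)). (Second claim of the Proposition on the behavior of the selection-adjusted weight function W₀.) -/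
/-!
Write `A = Ω⁻¹`, `α = Qᵀ A Q > 0`, `u = 𝕄 y + L` and `s = t + Qᵀ A u / α`. Completing the square in
`t` gives `(t Q + u)ᵀ A (t Q + u) = α s² + uᵀ Θ u` (`quad_complete_square`), so the Gaussian factor
of the integrand splits as `exp (-α s² / 2) * exp (-uᵀ Θ u / 2)`. Differentiating the integrand
in a coordinate direction multiplies it by a linear form in `v = t Q + u` or differentiates an
earlier linear factor; after at most three derivatives it is a polynomial of degree at
most three in such linear forms times the Gaussian. Each linear form is
`O((1 + ‖u‖) (1 + |s|))` (`linear_bound`), hence every such integrand is bounded by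
`K (1 + ‖u‖)³ exp (-uᵀ Θ u / 2) / (1 + s²)` (`gauss_bound`).
This single bound is used twice. Being locally uniform in `u`, it justifies differentiation under
the integral sign (`pderiv_integral`). Integrating it over all of `ℝ`, where the shift
`t ↦ s` disappears, bounds the third derivative by
`π K (1 + ‖u‖)³ exp (-uᵀ Θ u / 2)` regardless of `I₁`, `I₂` and `L`.
-/

open Matrix MeasureTheory

/-- The `p`-dimensional Gaussian density `φ(x; m, Σ)`. -/
noncomputable def gaussDensity {p : ℕ} (m : Fin p → ℝ) (S : Matrix (Fin p) (Fin p) ℝ)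
    (x : Fin p → ℝ) : ℝ :=
  (2 * Real.pi) ^ (-(p : ℝ) / 2) * S.det ^ (-(1 : ℝ) / 2) *
    Real.exp (-(1 / 2) * ((x - m) ⬝ᵥ S⁻¹.mulVec (x - m)))

/-- Partial derivative of `f : ℝ^p → ℝ` in the `i`-th coordinate direction. -/
noncomputable def pderiv' {p : ℕ} (i : Fin p) (f : (Fin p → ℝ) → ℝ) :
    (Fin p → ℝ) → ℝ :=
  fun z => deriv (fun s : ℝ => f (Function.update z i s)) (z i)

/-- The Euclidean norm of a vector in `Fin p → ℝ` (whose own norm is the sup norm). -/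
noncomputable def eNorm {p : ℕ} (u : Fin p → ℝ) : ℝ := Real.sqrt (∑ i, u i ^ 2)

lemma eNorm_nonneg {p : ℕ} (u : Fin p → ℝ) : 0 ≤ eNorm u := Real.sqrt_nonneg _

lemma continuous_eNorm {p : ℕ} : Continuous (eNorm (p := p)) := by
  unfold eNorm; fun_prop

lemma abs_dot_le {p : ℕ} (u a : Fin p → ℝ) : |u ⬝ᵥ a| ≤ (∑ i, |a i|) * eNorm u := by
  rw [Finset.sum_mul]
  refine (Finset.abs_sum_le_sum_abs _ _).trans (Finset.sum_le_sum fun i _ => ?_)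
  rw [abs_mul, mul_comm]
  refine mul_le_mul_of_nonneg_left ?_ (abs_nonneg _)
  refine Real.abs_le_sqrt ?_
  exact Finset.single_le_sum (f := fun i => u i ^ 2) (fun _ _ => sq_nonneg _) (Finset.mem_univ i)

lemma dot_symm {p : ℕ} {A : Matrix (Fin p) (Fin p) ℝ} (hA : Aᵀ = A) (u v : Fin p → ℝ) :
    u ⬝ᵥ A *ᵥ v = v ⬝ᵥ A *ᵥ u := by
  rw [dotProduct_mulVec, ← mulVec_transpose, hA, dotProduct_comm]

/-- The quadratic form `uᵀ Θ u`, written as in the statement with `A = Ω⁻¹`. -/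
noncomputable def thetaForm {p : ℕ} (A : Matrix (Fin p) (Fin p) ℝ) (Q u : Fin p → ℝ) : ℝ :=
  u ⬝ᵥ (A - (Q ⬝ᵥ A *ᵥ Q)⁻¹ • (A * vecMulVec Q Q * A)) *ᵥ u

/-- Completing the square in `t`: the part of the quadratic form orthogonal to `Q` is `Θ`. -/
lemma quad_complete_square {p : ℕ} {A : Matrix (Fin p) (Fin p) ℝ} (hA : Aᵀ = A)
    {Q : Fin p → ℝ} (hα : 0 < Q ⬝ᵥ A *ᵥ Q) (t : ℝ) (u : Fin p → ℝ) :
    (t • Q + u) ⬝ᵥ A *ᵥ (t • Q + u) =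
      (Q ⬝ᵥ A *ᵥ Q) * (t + (Q ⬝ᵥ A *ᵥ u) / (Q ⬝ᵥ A *ᵥ Q)) ^ 2 + thetaForm A Q u := by
  have h1 : (A * vecMulVec Q Q * A) *ᵥ u = (Q ⬝ᵥ A *ᵥ u) • A *ᵥ Q := by
    rw [← mulVec_mulVec, ← mulVec_mulVec, vecMulVec_mulVec]
    simp [mulVec_smul]
  rw [thetaForm, sub_mulVec, smul_mulVec, h1]
  simp only [mulVec_add, mulVec_smul, dotProduct_add, add_dotProduct, smul_dotProduct,
    dotProduct_smul, smul_eq_mul, dotProduct_sub]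
  rw [dot_symm hA u Q]
  field_simp
  ring

lemma poly_exp_bound {α : ℝ} (hα : 0 < α) :
    ∃ K : ℝ, 0 ≤ K ∧ ∀ s : ℝ,
      (1 + |s|) ^ 3 * Real.exp (-(1 / 2) * (α * s ^ 2)) ≤ K / (1 + s ^ 2) := by
  set δ := min 1 (α / 6) with hδ
  have hδ0 : 0 < δ := lt_min one_pos (by positivity)
  refine ⟨4 / δ ^ 3, by positivity, fun s => ?_⟩
  have h1 : (1 + |s|) ^ 3 ≤ 4 * (1 + s ^ 2) ^ 2 := by
    have h2 : (1 + |s|) ^ 2 ≤ 2 * (1 + s ^ 2) := by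
      nlinarith [sq_nonneg (1 - |s|), sq_abs s]
    calc (1 + |s|) ^ 3 ≤ (1 + |s|) ^ 4 :=
          pow_le_pow_right₀ (by linarith [abs_nonneg s]) (by norm_num)
      _ = ((1 + |s|) ^ 2) ^ 2 := by ring
      _ ≤ (2 * (1 + s ^ 2)) ^ 2 := by gcongr
      _ = _ := by ring
  -- the Gaussian is the cube of `exp (-(α / 6) s²)`, one factor for each power of `1 + s²`
  have h3 : δ * (1 + s ^ 2) ≤ Real.exp (α / 6 * s ^ 2) := by
    have := Real.add_one_le_exp (α / 6 * s ^ 2)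
    have a1 : δ ≤ 1 := min_le_left _ _
    have a2 : δ ≤ α / 6 := min_le_right _ _
    nlinarith [sq_nonneg s]
  have h4 : (δ * (1 + s ^ 2)) ^ 3 ≤ Real.exp (1 / 2 * (α * s ^ 2)) := by
    calc _ ≤ Real.exp (α / 6 * s ^ 2) ^ 3 := by gcongr
      _ = _ := by rw [← Real.exp_nat_mul]; congr 1; push_cast; ring
  rw [neg_mul, Real.exp_neg, ← div_eq_mul_inv, div_le_div_iff₀ (Real.exp_pos _) (by positivity)]
  calc (1 + |s|) ^ 3 * (1 + s ^ 2) ≤ 4 * (1 + s ^ 2) ^ 2 * (1 + s ^ 2) := by gcongr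
    _ = 4 / δ ^ 3 * (δ * (1 + s ^ 2)) ^ 3 := by field_simp
    _ ≤ _ := by gcongr

/-- A linear form evaluated at `t Q + u` grows at most like `(1 + ‖u‖) (1 + |s|)`, where `s` is
the centred variable in which the Gaussian has its peak at `0`. -/
lemma linear_bound {p : ℕ} (A : Matrix (Fin p) (Fin p) ℝ) (hA : Aᵀ = A)
    {Q : Fin p → ℝ} (hα : 0 < Q ⬝ᵥ A *ᵥ Q) (a : Fin p → ℝ) :
    ∃ B : ℝ, ∀ (t : ℝ) (u : Fin p → ℝ), |(t • Q + u) ⬝ᵥ a| ≤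
      B * ((1 + eNorm u) * (1 + |t + (Q ⬝ᵥ A *ᵥ u) / (Q ⬝ᵥ A *ᵥ Q)|)) := by
  set α := Q ⬝ᵥ A *ᵥ Q with hαd
  set B1 := ∑ i, |(A *ᵥ Q) i|
  set B2 := ∑ i, |a i|
  have hB1 : 0 ≤ B1 := Finset.sum_nonneg fun _ _ => abs_nonneg _
  have hB2 : 0 ≤ B2 := Finset.sum_nonneg fun _ _ => abs_nonneg _
  refine ⟨|Q ⬝ᵥ a| + (B1 * |Q ⬝ᵥ a| / α + B2), fun t u => ?_⟩
  have hu : |u ⬝ᵥ a| ≤ B2 * eNorm u := abs_dot_le u a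
  have hb : |Q ⬝ᵥ A *ᵥ u| ≤ B1 * eNorm u := by
    rw [dot_symm hA]; exact abs_dot_le u _
  set b := Q ⬝ᵥ A *ᵥ u
  set s := t + b / α with hs
  have ht : t = s - b / α := by rw [hs]; ring
  have e : (t • Q + u) ⬝ᵥ a = s * (Q ⬝ᵥ a) + (-(b * (Q ⬝ᵥ a) / α) + u ⬝ᵥ a) := by
    rw [add_dotProduct, smul_dotProduct, smul_eq_mul, ht]; ring
  have hN := eNorm_nonneg u
  have h5 : |b * (Q ⬝ᵥ a) / α| ≤ B1 * |Q ⬝ᵥ a| / α * eNorm u := by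
    rw [abs_div, abs_mul, abs_of_pos hα]
    calc |b| * |Q ⬝ᵥ a| / α ≤ (B1 * eNorm u) * |Q ⬝ᵥ a| / α := by gcongr
      _ = _ := by ring
  have h6 : |(t • Q + u) ⬝ᵥ a| ≤ |s| * |Q ⬝ᵥ a| + (B1 * |Q ⬝ᵥ a| / α + B2) * eNorm u := by
    rw [e]
    refine (abs_add_le _ _).trans ?_
    rw [abs_mul]
    have := abs_add_le (-(b * (Q ⬝ᵥ a) / α)) (u ⬝ᵥ a)
    rw [abs_neg] at this
    linarith
  refine h6.trans ?_
  have c0 : 0 ≤ B1 * |Q ⬝ᵥ a| / α + B2 := by positivity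
  set c := B1 * |Q ⬝ᵥ a| / α + B2
  have hq := abs_nonneg (Q ⬝ᵥ a)
  have hs0 := abs_nonneg s
  have x1 : |s| ≤ (1 + eNorm u) * (1 + |s|) := by nlinarith [mul_nonneg hN hs0]
  have x2 : eNorm u ≤ (1 + eNorm u) * (1 + |s|) := by nlinarith [mul_nonneg hN hs0]
  nlinarith [mul_le_mul_of_nonneg_left x1 hq, mul_le_mul_of_nonneg_left x2 c0]

/-- The `u`-dependent part of the bound on all the integrands. -/
noncomputable def envelope {p : ℕ} (A : Matrix (Fin p) (Fin p) ℝ) (Q : Fin p → ℝ)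
    (u : Fin p → ℝ) : ℝ :=
  (1 + eNorm u) ^ 3 * Real.exp (-(1 / 2) * thetaForm A Q u)

lemma envelope_nonneg {p : ℕ} (A : Matrix (Fin p) (Fin p) ℝ) (Q u : Fin p → ℝ) :
    0 ≤ envelope A Q u := by
  have := eNorm_nonneg u
  unfold envelope; positivity

lemma continuous_envelope {p : ℕ} (A : Matrix (Fin p) (Fin p) ℝ) (Q : Fin p → ℝ) :
    Continuous (envelope A Q) := by
  have := continuous_eNorm (p := p)
  unfold envelope thetaForm
  fun_prop

/-- `H` restricted to the line `t ↦ t Q + u` decays like a Cauchy density centred at the peak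
of the Gaussian, with a constant times `envelope A Q u` as amplitude. -/
def Decays {p : ℕ} (A : Matrix (Fin p) (Fin p) ℝ) (Q : Fin p → ℝ) (K : ℝ)
    (H : (Fin p → ℝ) → ℝ) : Prop :=
  ∀ (t : ℝ) (u : Fin p → ℝ), |H (t • Q + u)| ≤
    K * envelope A Q u / (1 + (t + (Q ⬝ᵥ A *ᵥ u) / (Q ⬝ᵥ A *ᵥ Q)) ^ 2)

/-- The Gaussian factor `exp (-vᵀ A v / 2)`. -/
noncomputable def gaussExp {p : ℕ} (A : Matrix (Fin p) (Fin p) ℝ) (v : Fin p → ℝ) : ℝ :=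
  Real.exp (-(1 / 2) * (v ⬝ᵥ A *ᵥ v))

/-- A function growing at most cubically in `(1 + ‖u‖) (1 + |s|)`, times the Gaussian, decays;
the constant depends on the function only through its growth constant `D`. -/
lemma gauss_bound {p : ℕ} (A : Matrix (Fin p) (Fin p) ℝ) (hA : Aᵀ = A)
    {Q : Fin p → ℝ} (hα : 0 < Q ⬝ᵥ A *ᵥ Q) (D : ℝ) (hD : 0 ≤ D) :
    ∃ K : ℝ, 0 ≤ K ∧ ∀ P : (Fin p → ℝ) → ℝ,
      (∀ (t : ℝ) (u : Fin p → ℝ), |P (t • Q + u)| ≤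
        D * ((1 + eNorm u) * (1 + |t + (Q ⬝ᵥ A *ᵥ u) / (Q ⬝ᵥ A *ᵥ Q)|)) ^ 3) →
      Decays A Q K (fun v => P v * gaussExp A v) := by
  obtain ⟨K, hK, hb⟩ := poly_exp_bound hα
  refine ⟨D * K, by positivity, fun P hP t u => ?_⟩
  have hP := hP t u
  simp only [gaussExp]
  rw [quad_complete_square hA hα, abs_mul, Real.abs_exp, mul_add, Real.exp_add]
  set s := t + (Q ⬝ᵥ A *ᵥ u) / (Q ⬝ᵥ A *ᵥ Q)
  have hb := hb s
  have hE := envelope_nonneg A Q u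
  calc _ ≤ (D * ((1 + eNorm u) * (1 + |s|)) ^ 3) *
          (Real.exp (-(1 / 2) * ((Q ⬝ᵥ A *ᵥ Q) * s ^ 2)) *
            Real.exp (-(1 / 2) * thetaForm A Q u)) := by gcongr
    _ = D * envelope A Q u *
          ((1 + |s|) ^ 3 * Real.exp (-(1 / 2) * ((Q ⬝ᵥ A *ᵥ Q) * s ^ 2))) := by
        unfold envelope; ring
    _ ≤ D * envelope A Q u * (K / (1 + s ^ 2)) := by gcongr
    _ = _ := by ring

lemma cauchy_shift (t b : ℝ) : 1 / (1 + (t + b) ^ 2) ≤ (2 + 2 * b ^ 2) * (1 + t ^ 2)⁻¹ := by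
  rw [← div_eq_mul_inv, div_le_div_iff₀ (by positivity) (by positivity)]
  nlinarith [sq_nonneg (t + 2 * b), sq_nonneg (b * (t + b))]

/-- The dominating function can be chosen locally uniformly in `u`, here along a curve. -/
lemma Decays.locally {p : ℕ} {A : Matrix (Fin p) (Fin p) ℝ} {Q : Fin p → ℝ} {K : ℝ} (hK : 0 ≤ K)
    {H : (Fin p → ℝ) → ℝ} (hH : Decays A Q K H) (γ : ℝ → Fin p → ℝ) (hγ : Continuous γ) (s₀ : ℝ) :
    ∃ R : ℝ, ∀ s ∈ Metric.ball s₀ 1, ∀ t : ℝ, ‖H (t • Q + γ s)‖ ≤ R * (1 + t ^ 2)⁻¹ := by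
  have hc : Continuous fun s : ℝ => K * envelope A Q (γ s) *
      (2 + 2 * ((Q ⬝ᵥ A *ᵥ γ s) / (Q ⬝ᵥ A *ᵥ Q)) ^ 2) := by
    have := continuous_envelope A Q
    fun_prop
  obtain ⟨R, hR⟩ := (isCompact_closedBall s₀ 1).exists_bound_of_continuousOn hc.continuousOn
  refine ⟨R, fun s hs t => ?_⟩
  have h1 := (Real.le_norm_self _).trans (hR s (Metric.ball_subset_closedBall hs))
  have hE := envelope_nonneg A Q (γ s)
  refine (hH t (γ s)).trans ?_
  calc _ = K * envelope A Q (γ s) *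
        (1 / (1 + (t + (Q ⬝ᵥ A *ᵥ γ s) / (Q ⬝ᵥ A *ᵥ Q)) ^ 2)) := by ring
    _ ≤ K * envelope A Q (γ s) * ((2 + 2 * ((Q ⬝ᵥ A *ᵥ γ s) / (Q ⬝ᵥ A *ᵥ Q)) ^ 2)
          * (1 + t ^ 2)⁻¹) := by gcongr; exact cauchy_shift _ _
    _ = (K * envelope A Q (γ s) * (2 + 2 * ((Q ⬝ᵥ A *ᵥ γ s) / (Q ⬝ᵥ A *ᵥ Q)) ^ 2))
          * (1 + t ^ 2)⁻¹ := by ring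
    _ ≤ _ := by gcongr

/-- Differentiation under the integral sign; `H'` is the derivative of `H` in the direction
`𝕄 eᵢ`. -/
lemma pderiv_integral {p : ℕ} {A : Matrix (Fin p) (Fin p) ℝ} {Q : Fin p → ℝ} {K : ℝ} (hK : 0 ≤ K)
    {H H' : (Fin p → ℝ) → ℝ} (hH : Decays A Q K H) (hH' : Decays A Q K H')
    (cH : Continuous H) (cH' : Continuous H') (𝕄 : Matrix (Fin p) (Fin p) ℝ) (i : Fin p)
    (hd : ∀ v s, HasDerivAt (fun s : ℝ => H (v + s • 𝕄 *ᵥ Pi.single i 1))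
      (H' (v + s • 𝕄 *ᵥ Pi.single i 1)) s) (S : Set ℝ) (L : Fin p → ℝ) :
    pderiv' i (fun y => ∫ t in S, H (t • Q + 𝕄 *ᵥ y + L)) =
      fun y => ∫ t in S, H' (t • Q + 𝕄 *ᵥ y + L) := by
  funext z
  unfold pderiv'
  set m := 𝕄 *ᵥ Pi.single i 1 with hm
  set w := 𝕄 *ᵥ z + L - z i • m with hw
  have hup : ∀ s t : ℝ, t • Q + 𝕄 *ᵥ (Function.update z i s) + L = t • Q + (w + s • m) := by
    intro s t
    have : Function.update z i s = z + (s - z i) • Pi.single i (1 : ℝ) := by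
      ext j
      by_cases h : j = i
      · subst h; simp
      · simp [h]
    rw [this, mulVec_add, mulVec_smul, hw, sub_smul]
    abel
  simp only [hup]
  have hz : ∀ t : ℝ, t • Q + 𝕄 *ᵥ z + L = t • Q + (w + z i • m) := by
    intro t; rw [← hup, Function.update_eq_self]
  simp only [hz]
  have hγ : Continuous fun s : ℝ => w + s • m := by fun_prop
  obtain ⟨R, hR⟩ := hH.locally hK _ hγ (z i)
  obtain ⟨R', hR'⟩ := hH'.locally hK _ hγ (z i)
  have hint : ∀ R : ℝ, Integrable (fun t : ℝ => R * (1 + t ^ 2)⁻¹) (volume.restrict S) :=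
    fun R => (integrable_inv_one_add_sq.const_mul R).restrict
  refine (hasDerivAt_integral_of_dominated_loc_of_deriv_le
    (F := fun s t => H (t • Q + (w + s • m))) (F' := fun s t => H' (t • Q + (w + s • m)))
    (bound := fun t => R' * (1 + t ^ 2)⁻¹) (Metric.ball_mem_nhds (z i) one_pos)
    ?_ ?_ ?_ ?_ (hint R') ?_).2.deriv
  · exact Filter.Eventually.of_forall fun s =>
      (cH.comp (by fun_prop : Continuous fun t : ℝ => t • Q + (w + s • m))).aestronglyMeasurable
  · refine (hint R).mono' ?_ (Filter.Eventually.of_forall fun t =>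
      hR (z i) (Metric.mem_ball_self one_pos) t)
    exact
      (cH.comp (by fun_prop : Continuous fun t : ℝ => t • Q + (w + z i • m))).aestronglyMeasurable
  · exact
      (cH'.comp (by fun_prop : Continuous fun t : ℝ => t • Q + (w + z i • m))).aestronglyMeasurable
  · exact Filter.Eventually.of_forall fun t s hs => hR' s hs t
  · refine Filter.Eventually.of_forall fun t s _ => ?_
    simpa only [add_assoc] using hd (t • Q + w) s

lemma Decays.integral_le {p : ℕ} {A : Matrix (Fin p) (Fin p) ℝ} {Q : Fin p → ℝ} {K : ℝ}
    (hK : 0 ≤ K) {H : (Fin p → ℝ) → ℝ} (hH : Decays A Q K H) (S : Set ℝ) (u : Fin p → ℝ) :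
    |∫ t in S, H (t • Q + u)| ≤ K * envelope A Q u * Real.pi := by
  set b := (Q ⬝ᵥ A *ᵥ u) / (Q ⬝ᵥ A *ᵥ Q) with hb
  have hi : Integrable fun t : ℝ => K * envelope A Q u * (1 + (t + b) ^ 2)⁻¹ :=
    (integrable_inv_one_add_sq.comp_add_right b).const_mul _
  have hE := envelope_nonneg A Q u
  calc |∫ t in S, H (t • Q + u)| ≤ ∫ t in S, K * envelope A Q u * (1 + (t + b) ^ 2)⁻¹ := by
        rw [← Real.norm_eq_abs]
        refine norm_integral_le_of_norm_le hi.restrict (Filter.Eventually.of_forall fun t => ?_)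
        exact (hH t u).trans_eq (div_eq_mul_inv _ _)
    _ ≤ ∫ t, K * envelope A Q u * (1 + (t + b) ^ 2)⁻¹ :=
        setIntegral_le_integral hi (Filter.Eventually.of_forall fun t => by
          simp only [Pi.zero_apply]; positivity)
    _ = _ := by
        rw [integral_const_mul, integral_add_right_eq_self (fun t : ℝ => (1 + t ^ 2)⁻¹) b,
          integral_univ_inv_one_add_sq]

lemma hasDerivAt_dot {p : ℕ} (v m a : Fin p → ℝ) (s : ℝ) :
    HasDerivAt (fun s : ℝ => (v + s • m) ⬝ᵥ a) (m ⬝ᵥ a) s := by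
  simp only [add_dotProduct, smul_dotProduct, smul_eq_mul]
  simpa using ((hasDerivAt_id s).mul_const (m ⬝ᵥ a)).const_add (v ⬝ᵥ a)

lemma hasDerivAt_gaussExp {p : ℕ} {A : Matrix (Fin p) (Fin p) ℝ} (hA : Aᵀ = A)
    (v m : Fin p → ℝ) (s : ℝ) :
    HasDerivAt (fun s : ℝ => gaussExp A (v + s • m))
      (-((v + s • m) ⬝ᵥ A *ᵥ m) * gaussExp A (v + s • m)) s := by
  have h : HasDerivAt (fun s : ℝ => (v + s • m) ⬝ᵥ A *ᵥ (v + s • m))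
      (2 * ((v + s • m) ⬝ᵥ A *ᵥ m)) s := by
    have e : (fun s : ℝ => (v + s • m) ⬝ᵥ A *ᵥ (v + s • m)) =
        fun s => (v + s • m) ⬝ᵥ A *ᵥ v + s * ((v + s • m) ⬝ᵥ A *ᵥ m) := by
      funext s; simp only [mulVec_add, mulVec_smul, dotProduct_add, dotProduct_smul, smul_eq_mul]
    rw [e]
    refine HasDerivAt.congr_deriv ((hasDerivAt_dot v m (A *ᵥ v) s).fun_add
      ((hasDerivAt_id' s).fun_mul (hasDerivAt_dot v m (A *ᵥ m) s))) ?_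
    simp only [add_dotProduct, smul_dotProduct, smul_eq_mul, dot_symm hA m v]
    ring
  unfold gaussExp
  refine HasDerivAt.congr_deriv ((h.const_mul (-(1 / 2))).exp) ?_
  ring

lemma continuous_gaussExp {p : ℕ} (A : Matrix (Fin p) (Fin p) ℝ) : Continuous (gaussExp A) := by
  unfold gaussExp; fun_prop

/-- Third-order partial derivatives of the weight function `W₀` are bounded by
`Σ_{l=0}^{3} C_l ‖𝕄z + L‖^l exp(−½(𝕄z+L)ᵀΘ(𝕄z+L))`, with constants not
depending on `L, I₁, I₂`. -/
theorem stmt_5 (p : ℕ) (Ω : Matrix (Fin p) (Fin p) ℝ) (hΩ : Ω.PosDef)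
    (Q : Fin p → ℝ) (hQ : Q ≠ 0) (𝕄 : Matrix (Fin p) (Fin p) ℝ) :
    ∃ C : Fin 4 → ℝ, (∀ l, 0 ≤ C l) ∧
      ∀ (i₁ i₂ i₃ : Fin p) (z L : Fin p → ℝ) (I₁ : ℝ) (I₂ : EReal),
        (I₁ : EReal) < I₂ →
        |pderiv' i₁ (pderiv' i₂ (pderiv' i₃
            (fun y => ∫ t in {t : ℝ | I₁ < t ∧ (t : EReal) < I₂},
              gaussDensity 0 Ω (t • Q + 𝕄.mulVec y + L)))) z|
          ≤ ∑ l : Fin 4,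
              C l * Real.sqrt (∑ i, (𝕄.mulVec z i + L i) ^ 2) ^ (l : ℕ) *
                Real.exp (-(1 / 2) * ((𝕄.mulVec z + L) ⬝ᵥ
                  (Ω⁻¹ - (Q ⬝ᵥ Ω⁻¹.mulVec Q)⁻¹ •
                    (Ω⁻¹ * Matrix.vecMulVec Q Q * Ω⁻¹)).mulVec (𝕄.mulVec z + L))) := by
  have hA : (Ω⁻¹)ᵀ = Ω⁻¹ := by
    have := hΩ.inv.isHermitian.eq
    rwa [conjTranspose_eq_transpose_of_trivial] at this
  have hα : 0 < Q ⬝ᵥ Ω⁻¹ *ᵥ Q := by simpa using hΩ.inv.dotProduct_mulVec_pos hQ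
  set A := Ω⁻¹ with hAd
  set c : ℝ := (2 * Real.pi) ^ (-(p : ℝ) / 2) * Ω.det ^ (-(1 : ℝ) / 2) with hc
  have hc0 : 0 ≤ c := mul_nonneg (Real.rpow_nonneg (by positivity) _)
    (Real.rpow_nonneg hΩ.det_pos.le _)
  set m : Fin p → Fin p → ℝ := fun i => 𝕄 *ᵥ Pi.single i 1 with hm
  -- one constant `B ≥ 1` controls all the linear forms and all the constants `mᵢᵀ A mⱼ`
  obtain ⟨B, hB1, hBl, hBc⟩ : ∃ B : ℝ, 1 ≤ B ∧
      (∀ i (t : ℝ) (u : Fin p → ℝ), |(t • Q + u) ⬝ᵥ A *ᵥ m i| ≤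
        B * ((1 + eNorm u) * (1 + |t + (Q ⬝ᵥ A *ᵥ u) / (Q ⬝ᵥ A *ᵥ Q)|))) ∧
      ∀ i j, |m i ⬝ᵥ A *ᵥ m j| ≤ B := by
    choose b hb using fun i => linear_bound A hA hα (A *ᵥ m i)
    have s1 : 0 ≤ ∑ i, |b i| := Finset.sum_nonneg fun _ _ => abs_nonneg _
    have s2 : 0 ≤ ∑ i, ∑ j, |m i ⬝ᵥ A *ᵥ m j| :=
      Finset.sum_nonneg fun _ _ => Finset.sum_nonneg fun _ _ => abs_nonneg _
    refine ⟨1 + ∑ i, |b i| + ∑ i, ∑ j, |m i ⬝ᵥ A *ᵥ m j|, by linarith, fun i t u => ?_,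
      fun i j => ?_⟩
    · refine (hb i t u).trans ?_
      have := eNorm_nonneg u
      have h1 : |b i| ≤ ∑ i, |b i| :=
        Finset.single_le_sum (f := fun i => |b i|) (fun _ _ => abs_nonneg _) (Finset.mem_univ i)
      gcongr
      linarith [le_abs_self (b i)]
    · have h1 : |m i ⬝ᵥ A *ᵥ m j| ≤ ∑ j, |m i ⬝ᵥ A *ᵥ m j| :=
        Finset.single_le_sum (f := fun j => |m i ⬝ᵥ A *ᵥ m j|) (fun _ _ => abs_nonneg _)
          (Finset.mem_univ j)
      have h2 : ∑ j, |m i ⬝ᵥ A *ᵥ m j| ≤ ∑ i, ∑ j, |m i ⬝ᵥ A *ᵥ m j| :=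
        Finset.single_le_sum (f := fun i => ∑ j, |m i ⬝ᵥ A *ᵥ m j|)
          (fun _ _ => Finset.sum_nonneg fun _ _ => abs_nonneg _) (Finset.mem_univ i)
      linarith
  have hB0 : 0 ≤ B := by linarith
  obtain ⟨K, hK, hdec⟩ := gauss_bound A hA hα (c * (4 * B ^ 3)) (by positivity)
  refine ⟨fun l => K * Real.pi * ![1, 3, 3, 1] l, fun l => ?_, ?_⟩
  · have := Real.pi_pos
    fin_cases l <;> simp <;> positivity
  intro i₁ i₂ i₃ z L I₁ I₂ _
  -- a polynomial factor of size at most `4 B³ X³` gives a decaying integrand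
  have hdec' : ∀ P : (Fin p → ℝ) → ℝ,
      (∀ (v : Fin p → ℝ) (X : ℝ), 1 ≤ X → (∀ i, |v ⬝ᵥ A *ᵥ m i| ≤ B * X) →
        |P v| ≤ 4 * B ^ 3 * X ^ 3) →
      Decays A Q K (fun v => c * P v * gaussExp A v) := by
    intro P hP
    refine hdec _ fun t u => ?_
    rw [abs_mul, abs_of_nonneg hc0, mul_assoc c]
    refine mul_le_mul_of_nonneg_left (hP _ _ ?_ fun i => hBl i t u) hc0
    have := eNorm_nonneg u
    have := abs_nonneg (t + (Q ⬝ᵥ A *ᵥ u) / (Q ⬝ᵥ A *ᵥ Q))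
    exact one_le_mul_of_one_le_of_one_le (by linarith) (by linarith)
  -- the polynomial factors of the integrand and of its first, second and third derivatives
  let P0 : (Fin p → ℝ) → ℝ := fun _ => 1
  let P1 : (Fin p → ℝ) → ℝ := fun v => -(v ⬝ᵥ A *ᵥ m i₃)
  let P2 : (Fin p → ℝ) → ℝ := fun v =>
    (v ⬝ᵥ A *ᵥ m i₂) * (v ⬝ᵥ A *ᵥ m i₃) - m i₂ ⬝ᵥ A *ᵥ m i₃
  let P3 : (Fin p → ℝ) → ℝ := fun v =>
    -((v ⬝ᵥ A *ᵥ m i₁) * ((v ⬝ᵥ A *ᵥ m i₂) * (v ⬝ᵥ A *ᵥ m i₃)))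
      + (m i₂ ⬝ᵥ A *ᵥ m i₃) * (v ⬝ᵥ A *ᵥ m i₁)
      + ((m i₁ ⬝ᵥ A *ᵥ m i₂) * (v ⬝ᵥ A *ᵥ m i₃) + (m i₁ ⬝ᵥ A *ᵥ m i₃) * (v ⬝ᵥ A *ᵥ m i₂))
  have hpow : ∀ X : ℝ, 1 ≤ X → 1 ≤ B * X := fun X hX => one_le_mul_of_one_le_of_one_le hB1 hX
  have D0 : Decays A Q K (fun v => c * P0 v * gaussExp A v) := hdec' _ fun v X hX h => by
    have := one_le_pow₀ (hpow X hX) (n := 3)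
    simp only [P0, abs_one]
    nlinarith
  have D1 : Decays A Q K (fun v => c * P1 v * gaussExp A v) := hdec' _ fun v X hX h => by
    have h1 := le_self_pow₀ (hpow X hX) (n := 3) (by norm_num)
    have h2 := hpow X hX
    simp only [P1, abs_neg]
    have := h i₃
    nlinarith
  have D2 : Decays A Q K (fun v => c * P2 v * gaussExp A v) := hdec' _ fun v X hX h => by
    have h1 := pow_le_pow_right₀ (hpow X hX) (show 2 ≤ 3 by norm_num)
    have h3 := le_self_pow₀ (hpow X hX) (n := 3) (by norm_num)
    have h2 := hpow X hX
    have h4 : B ≤ B * X := le_mul_of_one_le_right hB0 hX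
    have h5 : |(v ⬝ᵥ A *ᵥ m i₂) * (v ⬝ᵥ A *ᵥ m i₃)| ≤ (B * X) ^ 2 := by
      rw [abs_mul, sq]
      exact mul_le_mul (h i₂) (h i₃) (abs_nonneg _) (by linarith)
    simp only [P2]
    refine (abs_sub _ _).trans ?_
    have := hBc i₂ i₃
    nlinarith
  have D3 : Decays A Q K (fun v => c * P3 v * gaussExp A v) := hdec' _ fun v X hX h => by
    have h2 := hpow X hX
    have h1 := pow_le_pow_right₀ h2 (show 2 ≤ 3 by norm_num)
    have h4 : B ≤ B * X := le_mul_of_one_le_right hB0 hX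
    have h5 : |(v ⬝ᵥ A *ᵥ m i₁) * ((v ⬝ᵥ A *ᵥ m i₂) * (v ⬝ᵥ A *ᵥ m i₃))| ≤ (B * X) ^ 3 := by
      rw [abs_mul, abs_mul, pow_succ', sq]
      have := h i₁
      have := h i₂
      have := h i₃
      gcongr
    have h6 : ∀ i j k, |(m i ⬝ᵥ A *ᵥ m j) * (v ⬝ᵥ A *ᵥ m k)| ≤ (B * X) ^ 3 := fun i j k => by
      rw [abs_mul]
      refine le_trans ?_ h1
      rw [sq]
      exact mul_le_mul ((hBc i j).trans h4) (h k) (abs_nonneg _) (by linarith)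
    simp only [P3]
    refine (abs_add_le _ _).trans ((add_le_add (abs_add_le _ _) (abs_add_le _ _)).trans ?_)
    rw [abs_neg]
    have := h6 i₂ i₃ i₁
    have := h6 i₁ i₂ i₃
    have := h6 i₁ i₃ i₂
    nlinarith
  have cg := continuous_gaussExp A
  have C0 : Continuous (fun v => c * P0 v * gaussExp A v) := by fun_prop
  have C1 : Continuous (fun v => c * P1 v * gaussExp A v) := by fun_prop
  have C2 : Continuous (fun v => c * P2 v * gaussExp A v) := by fun_prop
  have C3 : Continuous (fun v => c * P3 v * gaussExp A v) := by fun_prop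
  have hW : ∀ v, gaussDensity 0 Ω v = c * P0 v * gaussExp A v := by
    intro v; simp [gaussDensity, gaussExp, P0, hc, hAd]
  simp only [hW]
  rw [pderiv_integral hK D0 D1 C0 C1 𝕄 i₃ ?_, pderiv_integral hK D1 D2 C1 C2 𝕄 i₂ ?_,
    pderiv_integral hK D2 D3 C2 C3 𝕄 i₁ ?_]
  · simp only [add_assoc]
    refine (D3.integral_le hK _ _).trans (le_of_eq ?_)
    have hN : Real.sqrt (∑ i, ((𝕄 *ᵥ z) i + L i) ^ 2) = eNorm (𝕄 *ᵥ z + L) := rfl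
    rw [hN]
    simp only [Fin.sum_univ_four, envelope, thetaForm]
    simp
    ring
  · intro v s
    have d1 := hasDerivAt_dot v (m i₁) (A *ᵥ m i₂) s
    have d2 := hasDerivAt_dot v (m i₁) (A *ᵥ m i₃) s
    refine HasDerivAt.congr_deriv
      ((((d1.fun_mul d2).sub_const (m i₂ ⬝ᵥ A *ᵥ m i₃)).const_mul c).fun_mul
      (hasDerivAt_gaussExp hA v (m i₁) s)) ?_
    simp only [P3, hm]
    ring
  · intro v s
    refine HasDerivAt.congr_deriv
      ((((hasDerivAt_dot v (m i₂) (A *ᵥ m i₃) s).fun_neg).const_mul c).fun_mul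
      (hasDerivAt_gaussExp hA v (m i₂) s)) ?_
    simp only [P2, hm]
    ring
  · intro v s
    refine HasDerivAt.congr_deriv ((hasDerivAt_gaussExp hA v (m i₃) s).const_mul (c * 1)) ?_
    simp only [P1, hm]
    ring
end

section
/- ∫_{ℝ^p} W₀(z)·φ(z; 0_p, I_p) dz = (2π)^{(1−p)/2}·det(Ω + 𝕄𝕄ᵀ)^{−1/2}·(QᵀΓQ)^{−1/2}·exp(−½ PᵀΘ_ΓP)·ℙ(T̄ ≥ I₁), where T̄ is a real Gaussian random variable with mean −(QᵀΓQ)⁻¹·QᵀΓP and variance (QᵀΓQ)⁻¹. (The Proposition computing the Gaussian expectation of the weight function, E_N[W₀(𝒵)], in the case I₂ = ∞, with the proportionality constant made explicit.) -/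
/-!
Three facts about Gaussian densities give the formula.

* `integral_gaussDensity_conv`: if `Z` is standard Gaussian and `Y` is an independent centred
  Gaussian of covariance `Ω`, then the law of `Y - M Z` has covariance `Ω + M Mᵀ`; in density form,
  `∫ φ(u + M z; 0, Ω) φ(z; 0, 1) dz = φ(u; 0, Ω + M Mᵀ)`. The exponent is a quadratic in `z` with
  matrix `A = 1 + Mᵀ Ω⁻¹ M`; completing the square leaves a Gaussian integral in `z`, the remaining
  quadratic form in `u` is identified by the Woodbury identity, and the constant by the matrix
  determinant lemma `det (Ω + M Mᵀ) = det Ω * det A`.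
* `gaussDensity_line`: along the line `t ↦ t Q + P`, a `p`-dimensional Gaussian density is a
  constant times a one-dimensional Gaussian density in `t`.
* Fubini's theorem, to integrate in `z` first. The integrand is positive and its `z`-integral is,
  by the first two facts, an integrable function of `t`, so it is integrable on the product.
-/

open Matrix MeasureTheory ProbabilityTheory

theorem integral_exp_neg_half_dotProduct (p : ℕ) :
    ∫ y : Fin p → ℝ, Real.exp (-(1 / 2) * (y ⬝ᵥ y)) = (2 * Real.pi) ^ ((p : ℝ) / 2) := by
  have h : ∀ y : Fin p → ℝ,
      Real.exp (-(1 / 2) * (y ⬝ᵥ y)) = ∏ i, Real.exp (-(1 / 2) * y i ^ 2) := by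
    intro y
    rw [← Real.exp_sum, dotProduct, Finset.mul_sum]
    simp only [sq]
  simp_rw [h]
  rw [integral_fintype_prod_volume_eq_pow (fun x : ℝ => Real.exp (-(1 / 2) * x ^ 2)),
    integral_gaussian, Fintype.card_fin, Real.sqrt_eq_rpow, ← Real.rpow_natCast,
    ← Real.rpow_mul (by positivity)]
  congr 1 <;> ring

/-- Gaussian normalisation for a positive definite precision matrix `A`, by the change of variables
`y = B z` where `A = Bᵀ B`. -/
theorem integral_exp_neg_half_posDef {p : ℕ} {A : Matrix (Fin p) (Fin p) ℝ} (hA : A.PosDef) :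
    ∫ z : Fin p → ℝ, Real.exp (-(1 / 2) * (z ⬝ᵥ A *ᵥ z)) =
      (2 * Real.pi) ^ ((p : ℝ) / 2) * A.det ^ (-(1 : ℝ) / 2) := by
  obtain ⟨B, hB⟩ : ∃ B : Matrix (Fin p) (Fin p) ℝ, A = Bᵀ * B := by
    open scoped MatrixOrder in
    obtain ⟨B, hB⟩ := CStarAlgebra.nonneg_iff_eq_star_mul_self.mp hA.posSemidef.nonneg
    exact ⟨B, by rw [hB, star_eq_conjTranspose, conjTranspose_eq_transpose_of_trivial]⟩
  have hdet : A.det = B.det ^ 2 := by rw [hB, det_mul, det_transpose, sq]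
  have hB0 : B.det ≠ 0 := by
    intro h
    have := hA.det_pos
    simp [hdet, h] at this
  have h : ∀ z : Fin p → ℝ, z ⬝ᵥ A *ᵥ z = (toLin' B z) ⬝ᵥ (toLin' B z) := by
    intro z
    rw [toLin'_apply, hB, ← mulVec_mulVec, dotProduct_mulVec, vecMul_transpose]
  have hm : Measurable (toLin' B) := (toLin' B).continuous_of_finiteDimensional.measurable
  simp_rw [h]
  rw [← integral_map (φ := toLin' B) (μ := volume)
      (f := fun y : Fin p → ℝ => Real.exp (-(1 / 2) * (y ⬝ᵥ y))) hm.aemeasurable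
      (by
        apply Continuous.aestronglyMeasurable
        unfold dotProduct
        fun_prop),
    Real.map_matrix_volume_pi_eq_smul_volume_pi hB0, integral_smul_measure,
    integral_exp_neg_half_dotProduct, hdet, smul_eq_mul, mul_comm,
    ENNReal.toReal_ofReal (abs_nonneg _), ← sq_abs, ← Real.rpow_natCast,
    ← Real.rpow_mul (abs_nonneg _), abs_inv, ← Real.rpow_neg_one]
  norm_num

theorem quad_complete_square_s6 {p : ℕ} {A : Matrix (Fin p) (Fin p) ℝ} (hA : A.PosDef)
    (b z : Fin p → ℝ) :
    z ⬝ᵥ A *ᵥ z + 2 * (z ⬝ᵥ b) =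
      (z + A⁻¹ *ᵥ b) ⬝ᵥ A *ᵥ (z + A⁻¹ *ᵥ b) - b ⬝ᵥ A⁻¹ *ᵥ b := by
  have hu : IsUnit A.det := (isUnit_iff_isUnit_det A).mp hA.isUnit
  have hAi : A *ᵥ (A⁻¹ *ᵥ b) = b := by
    rw [mulVec_mulVec, mul_nonsing_inv _ hu, one_mulVec]
  have hT : Aᵀ = A := by
    simpa using hA.isHermitian.eq
  have hs : (A⁻¹ *ᵥ b) ⬝ᵥ A *ᵥ z = z ⬝ᵥ b := by
    rw [dotProduct_mulVec, ← mulVec_transpose, hT, hAi, dotProduct_comm]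
  rw [mulVec_add, add_dotProduct, dotProduct_add, dotProduct_add, hAi, hs,
    dotProduct_comm (A⁻¹ *ᵥ b) b]
  ring

/-- Averaging the density of covariance `Ω` over a shift by `M z`, with `z` standard Gaussian,
adds `M Mᵀ` to the covariance. -/
theorem integral_gaussDensity_conv {p : ℕ} {Ω : Matrix (Fin p) (Fin p) ℝ} (hΩ : Ω.PosDef)
    (M : Matrix (Fin p) (Fin p) ℝ) (u : Fin p → ℝ) :
    ∫ z : Fin p → ℝ, gaussDensity 0 Ω (u + M *ᵥ z) *
        gaussDensity 0 (1 : Matrix (Fin p) (Fin p) ℝ) z =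
      gaussDensity 0 (Ω + M * Mᵀ) u := by
  set A : Matrix (Fin p) (Fin p) ℝ := 1 + Mᵀ * Ω⁻¹ * M with hAdef
  have hA : A.PosDef := by
    have := hΩ.inv.posSemidef.conjTranspose_mul_mul_same M
    rw [conjTranspose_eq_transpose_of_trivial] at this
    exact PosDef.one.add_posSemidef this
  have hT : (Ω⁻¹)ᵀ = Ω⁻¹ := by
    simpa using hΩ.inv.isHermitian.eq
  have hdet : (Ω + M * Mᵀ).det = Ω.det * A.det :=
    det_add_mul M Mᵀ ((isUnit_iff_isUnit_det Ω).mp hΩ.isUnit)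
  have hinv : (Ω + M * Mᵀ)⁻¹ = Ω⁻¹ - Ω⁻¹ * M * A⁻¹ * Mᵀ * Ω⁻¹ := by
    have := add_mul_mul_inv_eq_sub Ω M 1 Mᵀ hΩ.isUnit isUnit_one
      (by rw [inv_one]; exact hA.isUnit)
    simpa [inv_one] using this
  set b : Fin p → ℝ := Mᵀ *ᵥ (Ω⁻¹ *ᵥ u) with hb
  have hquad : ∀ z : Fin p → ℝ,
      (u + M *ᵥ z) ⬝ᵥ Ω⁻¹ *ᵥ (u + M *ᵥ z) + z ⬝ᵥ z =
        (z + A⁻¹ *ᵥ b) ⬝ᵥ A *ᵥ (z + A⁻¹ *ᵥ b) + u ⬝ᵥ (Ω + M * Mᵀ)⁻¹ *ᵥ u := by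
    intro z
    have h1 : (M *ᵥ z) ⬝ᵥ Ω⁻¹ *ᵥ u = z ⬝ᵥ b := by
      rw [hb, dotProduct_mulVec z, vecMul_transpose]
    have h2 : u ⬝ᵥ Ω⁻¹ *ᵥ (M *ᵥ z) = z ⬝ᵥ b := by
      rw [dotProduct_mulVec, ← mulVec_transpose, hT, dotProduct_comm, h1]
    have h3 : z ⬝ᵥ A *ᵥ z = z ⬝ᵥ z + (M *ᵥ z) ⬝ᵥ Ω⁻¹ *ᵥ (M *ᵥ z) := by
      rw [hAdef, add_mulVec, dotProduct_add, one_mulVec, ← mulVec_mulVec, ← mulVec_mulVec,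
        dotProduct_mulVec z Mᵀ, vecMul_transpose]
    have h4 : u ⬝ᵥ (Ω + M * Mᵀ)⁻¹ *ᵥ u = u ⬝ᵥ Ω⁻¹ *ᵥ u - b ⬝ᵥ A⁻¹ *ᵥ b := by
      rw [hinv, sub_mulVec, dotProduct_sub]
      simp only [← mulVec_mulVec]
      rw [← hb, dotProduct_mulVec u _ (M *ᵥ _), ← mulVec_transpose, hT, dotProduct_mulVec _ M,
        ← mulVec_transpose]
    have h5 := quad_complete_square_s6 hA b z
    rw [mulVec_add, add_dotProduct, dotProduct_add, dotProduct_add]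
    linarith
  have hpt : ∀ z : Fin p → ℝ, gaussDensity 0 Ω (u + M *ᵥ z) *
        gaussDensity 0 (1 : Matrix (Fin p) (Fin p) ℝ) z =
      ((2 * Real.pi) ^ (-(p : ℝ) / 2) * Ω.det ^ (-(1 : ℝ) / 2) * (2 * Real.pi) ^ (-(p : ℝ) / 2) *
        Real.exp (-(1 / 2) * (u ⬝ᵥ (Ω + M * Mᵀ)⁻¹ *ᵥ u))) *
        Real.exp (-(1 / 2) * ((z + A⁻¹ *ᵥ b) ⬝ᵥ A *ᵥ (z + A⁻¹ *ᵥ b))) := by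
    intro z
    simp only [gaussDensity, sub_zero, inv_one, one_mulVec, det_one, Real.one_rpow, mul_one]
    have := congrArg (fun x => Real.exp (-(1 / 2) * x)) (hquad z)
    simp only [mul_add, Real.exp_add] at this
    linear_combination (2 * Real.pi) ^ (-(p : ℝ) / 2) * Ω.det ^ (-(1 : ℝ) / 2) *
      (2 * Real.pi) ^ (-(p : ℝ) / 2) * this
  simp_rw [hpt]
  rw [integral_const_mul, integral_add_right_eq_self
      (fun z : Fin p → ℝ => Real.exp (-(1 / 2) * (z ⬝ᵥ A *ᵥ z))),
    integral_exp_neg_half_posDef hA, gaussDensity, hdet,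
    Real.mul_rpow hΩ.det_pos.le hA.det_pos.le, sub_zero]
  have hpi : (2 * Real.pi) ^ (-(p : ℝ) / 2) * (2 * Real.pi) ^ ((p : ℝ) / 2) = 1 := by
    rw [← Real.rpow_add (by positivity), neg_div, neg_add_cancel, Real.rpow_zero]
  linear_combination (2 * Real.pi) ^ (-(p : ℝ) / 2) * Ω.det ^ (-(1 : ℝ) / 2) *
    Real.exp (-(1 / 2) * (u ⬝ᵥ (Ω + M * Mᵀ)⁻¹ *ᵥ u)) * A.det ^ (-(1 : ℝ) / 2) * hpi

theorem continuous_gaussDensity {p : ℕ} (m : Fin p → ℝ) (S : Matrix (Fin p) (Fin p) ℝ) :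
    Continuous (gaussDensity m S) := by
  unfold gaussDensity
  simp only [dotProduct, mulVec]
  fun_prop

theorem gaussDensity_pos {p : ℕ} (m : Fin p → ℝ) {S : Matrix (Fin p) (Fin p) ℝ} (hS : S.PosDef)
    (x : Fin p → ℝ) : 0 < gaussDensity m S x := by
  have := hS.det_pos
  unfold gaussDensity
  positivity

/-- The restriction of a centred Gaussian density to the line `t ↦ t • Q + P` is a multiple of the
Gaussian density in `t` with mean `-(QᵀS⁻¹Q)⁻¹ QᵀS⁻¹P` and variance `(QᵀS⁻¹Q)⁻¹`. -/
theorem gaussDensity_line {p : ℕ} {S : Matrix (Fin p) (Fin p) ℝ} (hS : S.PosDef)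
    {Q : Fin p → ℝ} (hQ : Q ≠ 0) (P : Fin p → ℝ) (t : ℝ) :
    gaussDensity 0 S (t • Q + P) =
      ((2 * Real.pi) ^ ((1 - (p : ℝ)) / 2) * S.det ^ (-(1 : ℝ) / 2) *
        (Q ⬝ᵥ S⁻¹ *ᵥ Q) ^ (-(1 : ℝ) / 2) *
        Real.exp (-(1 / 2) * (P ⬝ᵥ (S⁻¹ - (Q ⬝ᵥ S⁻¹ *ᵥ Q)⁻¹ •
          (S⁻¹ * vecMulVec Q Q * S⁻¹)) *ᵥ P))) *
      gaussianPDFReal (-(Q ⬝ᵥ S⁻¹ *ᵥ Q)⁻¹ * (Q ⬝ᵥ S⁻¹ *ᵥ P))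
        (Real.toNNReal (Q ⬝ᵥ S⁻¹ *ᵥ Q)⁻¹) t := by
  have ha : 0 < Q ⬝ᵥ S⁻¹ *ᵥ Q := by simpa using hS.inv.dotProduct_mulVec_pos hQ
  have hT : (S⁻¹)ᵀ = S⁻¹ := by
    simpa using hS.inv.isHermitian.eq
  have hsymm : P ⬝ᵥ S⁻¹ *ᵥ Q = Q ⬝ᵥ S⁻¹ *ᵥ P := by
    rw [dotProduct_mulVec, ← mulVec_transpose, hT, dotProduct_comm]
  have h1 : (t • Q + P) ⬝ᵥ S⁻¹ *ᵥ (t • Q + P) = t ^ 2 * (Q ⬝ᵥ S⁻¹ *ᵥ Q) +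
      2 * t * (Q ⬝ᵥ S⁻¹ *ᵥ P) + P ⬝ᵥ S⁻¹ *ᵥ P := by
    simp only [mulVec_add, add_dotProduct, dotProduct_add, mulVec_smul, smul_dotProduct,
      dotProduct_smul, smul_eq_mul, hsymm]
    ring
  have h2 : P ⬝ᵥ (S⁻¹ - (Q ⬝ᵥ S⁻¹ *ᵥ Q)⁻¹ • (S⁻¹ * vecMulVec Q Q * S⁻¹)) *ᵥ P =
      P ⬝ᵥ S⁻¹ *ᵥ P - (Q ⬝ᵥ S⁻¹ *ᵥ Q)⁻¹ * (Q ⬝ᵥ S⁻¹ *ᵥ P) ^ 2 := by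
    rw [sub_mulVec, dotProduct_sub, smul_mulVec, dotProduct_smul, ← mulVec_mulVec,
      ← mulVec_mulVec, vecMulVec_mulVec, op_smul_eq_smul, mulVec_smul, dotProduct_smul, hsymm]
    simp only [smul_eq_mul]
    ring
  rw [h2, gaussDensity, sub_zero, h1, gaussianPDFReal,
    Real.coe_toNNReal _ (inv_nonneg.mpr ha.le)]
  generalize Q ⬝ᵥ S⁻¹ *ᵥ Q = a at *
  generalize Q ⬝ᵥ S⁻¹ *ᵥ P = b at *
  generalize P ⬝ᵥ S⁻¹ *ᵥ P = c at *
  have hc : (√(2 * Real.pi * a⁻¹))⁻¹ = (2 * Real.pi) ^ (-(1 : ℝ) / 2) * a ^ ((1 : ℝ) / 2) := by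
    rw [Real.sqrt_eq_rpow, ← Real.rpow_neg (by positivity), Real.mul_rpow (by positivity)
      (by positivity), Real.inv_rpow ha.le, ← Real.rpow_neg ha.le]
    norm_num
  have hpi : (2 * Real.pi) ^ (-(p : ℝ) / 2) =
      (2 * Real.pi) ^ ((1 - (p : ℝ)) / 2) * (2 * Real.pi) ^ (-(1 : ℝ) / 2) := by
    rw [← Real.rpow_add (by positivity)]
    congr 1
    ring
  have haa : a ^ (-(1 : ℝ) / 2) * a ^ ((1 : ℝ) / 2) = 1 := by
    rw [← Real.rpow_add ha, neg_div, neg_add_cancel, Real.rpow_zero]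
  have he : Real.exp (-(1 / 2) * (t ^ 2 * a + 2 * t * b + c)) =
      Real.exp (-(1 / 2) * (c - a⁻¹ * b ^ 2)) *
        Real.exp (-(t - -a⁻¹ * b) ^ 2 / (2 * a⁻¹)) := by
    rw [← Real.exp_add]
    congr 1
    field_simp
    ring
  rw [hc, hpi, he]
  linear_combination (-(2 * Real.pi) ^ ((1 - (p : ℝ)) / 2) * (2 * Real.pi) ^ (-(1 : ℝ) / 2) *
    S.det ^ (-(1 : ℝ) / 2) * (Real.exp (-(1 / 2) * (c - a⁻¹ * b ^ 2)) *
        Real.exp (-(t - -a⁻¹ * b) ^ 2 / (2 * a⁻¹)))) * haa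

/-- Explicit value of the Gaussian expectation of the weight function:
`∫ W₀(z) φ(z;0,I) dz = (2π)^{(1−p)/2} det(Ω+𝕄𝕄ᵀ)^{−1/2} (QᵀΓQ)^{−1/2}
exp(−½PᵀΘ_ΓP)·ℙ(T̄ ≥ I₁)`. -/
theorem stmt_6 (p : ℕ) (Ω : Matrix (Fin p) (Fin p) ℝ) (hΩ : Ω.PosDef)
    (𝕄 : Matrix (Fin p) (Fin p) ℝ) (Q : Fin p → ℝ) (hQ : Q ≠ 0)
    (P : Fin p → ℝ) (I₁ : ℝ) :
    let Γ := (Ω + 𝕄 * 𝕄ᵀ)⁻¹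
    let ΘΓ := Γ - (Q ⬝ᵥ Γ.mulVec Q)⁻¹ • (Γ * Matrix.vecMulVec Q Q * Γ)
    (∫ z : Fin p → ℝ,
        (∫ t in Set.Ioi I₁, gaussDensity 0 Ω (t • Q + 𝕄.mulVec z + P)) *
          gaussDensity 0 (1 : Matrix (Fin p) (Fin p) ℝ) z) =
      (2 * Real.pi) ^ ((1 - (p : ℝ)) / 2) * ((Ω + 𝕄 * 𝕄ᵀ).det) ^ (-(1 : ℝ) / 2) *
        (Q ⬝ᵥ Γ.mulVec Q) ^ (-(1 : ℝ) / 2) *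
        Real.exp (-(1 / 2) * (P ⬝ᵥ ΘΓ.mulVec P)) *
        ((gaussianReal (-(Q ⬝ᵥ Γ.mulVec Q)⁻¹ * (Q ⬝ᵥ Γ.mulVec P))
            (Real.toNNReal (Q ⬝ᵥ Γ.mulVec Q)⁻¹)) (Set.Ici I₁)).toReal := by
  intro Γ ΘΓ
  have hS : (Ω + 𝕄 * 𝕄ᵀ).PosDef := by
    have := posSemidef_self_mul_conjTranspose 𝕄
    rw [conjTranspose_eq_transpose_of_trivial] at this
    exact hΩ.add_posSemidef this
  have ha : 0 < Q ⬝ᵥ Γ *ᵥ Q := by simpa using hS.inv.dotProduct_mulVec_pos hQ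
  have hv : Real.toNNReal (Q ⬝ᵥ Γ *ᵥ Q)⁻¹ ≠ 0 := by simpa using ha
  let F : (Fin p → ℝ) → ℝ → ℝ := fun z t =>
    gaussDensity 0 Ω (t • Q + 𝕄 *ᵥ z + P) * gaussDensity 0 (1 : Matrix (Fin p) (Fin p) ℝ) z
  have hFpos : ∀ z t, 0 < F z t := fun z t =>
    mul_pos (gaussDensity_pos _ hΩ _) (gaussDensity_pos _ PosDef.one _)
  have hFcont : Continuous (Function.uncurry fun t z => F z t) := by
    refine ((continuous_gaussDensity _ _).comp ?_).mul ((continuous_gaussDensity _ _).comp ?_)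
    · have : Continuous fun z : Fin p → ℝ => 𝕄 *ᵥ z := (mulVecLin 𝕄).continuous_of_finiteDimensional
      fun_prop
    · fun_prop
  have hconv : ∀ t, ∫ z, F z t = gaussDensity 0 (Ω + 𝕄 * 𝕄ᵀ) (t • Q + P) := by
    intro t
    rw [← integral_gaussDensity_conv hΩ]
    refine integral_congr_ae (.of_forall fun z => ?_)
    simp only [F, add_right_comm]
  have hline := gaussDensity_line hS hQ P
  have hint : Integrable (Function.uncurry fun t z => F z t)
      ((volume.restrict (Set.Ioi I₁)).prod volume) := by
    rw [integrable_prod_iff hFcont.aestronglyMeasurable]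
    refine ⟨.of_forall fun t => ?_, ?_⟩
    · by_contra h
      -- Otherwise the Bochner integral in `hconv` would take its default value `0`.
      have h0 := hconv t
      rw [show ∫ z, F z t = 0 from integral_undef h] at h0
      exact (gaussDensity_pos 0 hS _).ne h0
    · simp only [Function.uncurry, Real.norm_of_nonneg (hFpos _ _).le, hconv, hline]
      exact ((integrable_gaussianPDFReal _ _).const_mul _).restrict
  simp_rw [← integral_mul_const]
  change ∫ z, ∫ t in Set.Ioi I₁, F z t = _
  rw [← integral_integral_swap hint]
  simp only [hconv, hline]
  rw [integral_const_mul, gaussianReal_apply_eq_integral _ hv,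
    ENNReal.toReal_ofReal (integral_nonneg fun _ => gaussianPDFReal_nonneg _ _ _),
    integral_Ici_eq_integral_Ioi]
end

section
/- For every w ∈ ℝ^p and every I₁ ∈ ℝ, ∫_{I₁}^{∞} φ(Qt + w; 0_p, Ω) dt ≤ (2π)^{(1−p)/2}·det(Ω)^{−1/2}·a^{−1/2}·exp(−½ wᵀΘw), where a := QᵀΩ⁻¹Q. (The uniform-in-(w, I₁) upper bound on the weight function W₀ by the Gaussian factor exp(−½wᵀΘw), underlying the Proposition on the behavior of W₀.) -/
/-! With `A = Ω⁻¹`, `a = Qᵀ A Q > 0` and `b = Qᵀ A w`, completing the square along the line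
`t ↦ t Q + w` gives `(t Q + w)ᵀ A (t Q + w) = a (t + b / a)² + wᵀ Θ w`
(`quadForm_line`). The density restricted to the line is therefore a constant times a
one-dimensional Gaussian in `t`; being nonnegative, its integral over a half-line is at most its
integral over `ℝ`, which is `√(2π / a)` by translation invariance. -/

open Matrix MeasureTheory

/-- Completing the square along the line `t ↦ t Q + w`: the part that does not depend on `t` is
the quadratic form of `A - (Qᵀ A Q)⁻¹ A Q Qᵀ A` at `w`. -/
lemma quadForm_line {p : ℕ} (A : Matrix (Fin p) (Fin p) ℝ) (hA : Aᵀ = A)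
    (Q w : Fin p → ℝ) (ha : Q ⬝ᵥ A.mulVec Q ≠ 0) (t : ℝ) :
    (t • Q + w) ⬝ᵥ A.mulVec (t • Q + w) =
      (Q ⬝ᵥ A.mulVec Q) * (t + (Q ⬝ᵥ A.mulVec w) / (Q ⬝ᵥ A.mulVec Q)) ^ 2 +
        w ⬝ᵥ (A - (Q ⬝ᵥ A.mulVec Q)⁻¹ • (A * Matrix.vecMulVec Q Q * A)).mulVec w := by
  have hsymm : w ⬝ᵥ A.mulVec Q = Q ⬝ᵥ A.mulVec w := by
    rw [dotProduct_mulVec, ← mulVec_transpose, hA, dotProduct_comm]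
  have hrank : w ⬝ᵥ (A * Matrix.vecMulVec Q Q * A).mulVec w = (Q ⬝ᵥ A.mulVec w) ^ 2 := by
    rw [← mulVec_mulVec, ← mulVec_mulVec, vecMulVec_mulVec, op_smul_eq_smul, mulVec_smul,
      dotProduct_smul, hsymm, smul_eq_mul, sq]
  rw [sub_mulVec, smul_mulVec, dotProduct_sub, dotProduct_smul, hrank]
  simp only [mulVec_add, mulVec_smul, dotProduct_add, add_dotProduct, smul_dotProduct,
    dotProduct_smul, smul_eq_mul, hsymm]
  field_simp
  ring

/-- Uniform upper bound on the weight function: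
`∫_{I₁}^{∞} φ(Qt + w; 0, Ω) dt ≤ (2π)^{(1−p)/2} det(Ω)^{−1/2} a^{−1/2} exp(−½wᵀΘw)`. -/
theorem stmt_12 (p : ℕ) (Ω : Matrix (Fin p) (Fin p) ℝ) (hΩ : Ω.PosDef)
    (Q : Fin p → ℝ) (hQ : Q ≠ 0) :
    ∀ (w : Fin p → ℝ) (I₁ : ℝ),
      (∫ t in Set.Ioi I₁, gaussDensity 0 Ω (t • Q + w)) ≤
        (2 * Real.pi) ^ ((1 - (p : ℝ)) / 2) * Ω.det ^ (-(1 : ℝ) / 2) *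
          (Q ⬝ᵥ Ω⁻¹.mulVec Q) ^ (-(1 : ℝ) / 2) *
          Real.exp (-(1 / 2) * (w ⬝ᵥ (Ω⁻¹ - (Q ⬝ᵥ Ω⁻¹.mulVec Q)⁻¹ •
            (Ω⁻¹ * Matrix.vecMulVec Q Q * Ω⁻¹)).mulVec w)) := by
  intro w I₁
  have hA : Ω⁻¹.PosDef := hΩ.inv
  have hAt : (Ω⁻¹)ᵀ = Ω⁻¹ := by simpa [conjTranspose_eq_transpose_of_trivial] using hA.1.eq
  have ha : 0 < Q ⬝ᵥ Ω⁻¹.mulVec Q := by simpa using hA.dotProduct_mulVec_pos hQ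
  have hdet : 0 < Ω.det := hΩ.det_pos
  have hquad := quadForm_line Ω⁻¹ hAt Q w ha.ne'
  set q := w ⬝ᵥ (Ω⁻¹ - (Q ⬝ᵥ Ω⁻¹.mulVec Q)⁻¹ •
            (Ω⁻¹ * Matrix.vecMulVec Q Q * Ω⁻¹)).mulVec w
  set a := Q ⬝ᵥ Ω⁻¹.mulVec Q
  set b := Q ⬝ᵥ Ω⁻¹.mulVec w
  have hpi : (0 : ℝ) < 2 * Real.pi := by positivity
  have hdens : ∀ t : ℝ, gaussDensity 0 Ω (t • Q + w) =
      (2 * Real.pi) ^ (-(p : ℝ) / 2) * Ω.det ^ (-(1 : ℝ) / 2) * Real.exp (-(1 / 2) * q) *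
        Real.exp (-(a / 2) * (t + b / a) ^ 2) := by
    intro t
    rw [gaussDensity, sub_zero, hquad, mul_assoc _ (Real.exp _), ← Real.exp_add]
    congr 2
    ring
  have hint : Integrable fun t : ℝ => Real.exp (-(a / 2) * (t + b / a) ^ 2) :=
    (integrable_exp_neg_mul_sq (half_pos ha)).comp_add_right (b / a)
  have hval : ∫ t : ℝ, Real.exp (-(a / 2) * (t + b / a) ^ 2) =
      (2 * Real.pi) ^ ((1 : ℝ) / 2) * a ^ (-(1 : ℝ) / 2) := by
    rw [integral_add_right_eq_self (fun t : ℝ => Real.exp (-(a / 2) * t ^ 2)) (b / a),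
      integral_gaussian, show Real.pi / (a / 2) = 2 * Real.pi * a⁻¹ by field_simp,
      Real.sqrt_eq_rpow, Real.mul_rpow hpi.le (inv_nonneg.2 ha.le), Real.inv_rpow ha.le,
      neg_div, Real.rpow_neg ha.le]
  have hle : (∫ t in Set.Ioi I₁, Real.exp (-(a / 2) * (t + b / a) ^ 2)) ≤
      (2 * Real.pi) ^ ((1 : ℝ) / 2) * a ^ (-(1 : ℝ) / 2) :=
    hval ▸ setIntegral_le_integral hint (Filter.Eventually.of_forall fun _ => (Real.exp_pos _).le)
  have hpow : (2 * Real.pi) ^ ((1 - (p : ℝ)) / 2) =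
      (2 * Real.pi) ^ (-(p : ℝ) / 2) * (2 * Real.pi) ^ ((1 : ℝ) / 2) := by
    rw [← Real.rpow_add hpi]
    congr 1
    ring
  simp_rw [hdens]
  rw [integral_const_mul, hpow]
  refine (mul_le_mul_of_nonneg_left hle (by positivity)).trans_eq ?_
  ring
end

section
/- If w ∈ ℝ^p satisfies QᵀΩ⁻¹w ≤ 0, then ∫_{0}^{∞} φ(Qt + w; 0_p, Ω) dt ≥ (1/2)·(2π)^{(1−p)/2}·det(Ω)^{−1/2}·a^{−1/2}·exp(−½ wᵀΘw), where a := QᵀΩ⁻¹Q. (The pointwise lower bound on the weight function over the half-space {QᵀΩ⁻¹(𝕄z − r_n b̄) < 0}, which is the core of part (i) of the Proposition lower-bounding E_N[W₀(𝒵)].) -/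
/-!
Put `a = QᵀΩ⁻¹Q`, `b = QᵀΩ⁻¹w`, `c = wᵀΩ⁻¹w`. Completing the square,
`(tQ + w)ᵀΩ⁻¹(tQ + w) = a (t - s)² + (c - b²/a)` with `s = -b/a`, and `c - b²/a = wᵀΘw`.
So the integral is an explicit constant times `∫_0^∞ exp(-(a/2)(t - s)²) dt`. Since `b ≤ 0` gives
`s ≥ 0`, the half-line contains `(s, ∞)`, over which the integral is the half-Gaussian integral
`√(2π/a) / 2` (`half_gaussian_le`).
-/

open Matrix MeasureTheory

/-- A Gaussian with nonnegative centre puts at least half of its mass on the positive half-line. -/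
lemma half_gaussian_le {a s : ℝ} (ha : 0 < a) (hs : 0 ≤ s) :
    √(2 * Real.pi / a) / 2 ≤ ∫ t in Set.Ioi (0 : ℝ), Real.exp (-(a / 2) * (t - s) ^ 2) := by
  have hint : Integrable (fun t : ℝ => Real.exp (-(a / 2) * t ^ 2)) :=
    integrable_exp_neg_mul_sq (by positivity)
  have hint' : Integrable (fun t : ℝ => Real.exp (-(a / 2) * (t - s) ^ 2)) :=
    hint.comp_sub_right s
  calc √(2 * Real.pi / a) / 2 = ∫ t in Set.Ioi (0 : ℝ), Real.exp (-(a / 2) * t ^ 2) := by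
        rw [integral_gaussian_Ioi]
        congr 2
        field_simp
    _ = ∫ t in Set.Ioi s, Real.exp (-(a / 2) * (t - s) ^ 2) := by
        have h := (measurePreserving_sub_right volume s).setIntegral_preimage_emb
          (MeasurableEquiv.subRight s).measurableEmbedding
          (fun t : ℝ => Real.exp (-(a / 2) * t ^ 2)) (Set.Ioi 0)
        rw [← h]
        simp
    _ ≤ _ := setIntegral_mono_set hint'.integrableOn
        (Filter.Eventually.of_forall fun t => (Real.exp_pos _).le)
        (Set.Ioi_subset_Ioi hs).eventuallyLE

/-- The quadratic form of `Θ`, in terms of that of a symmetric `A` (playing the role of `Ω⁻¹`). -/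
lemma theta_form {p : ℕ} {A : Matrix (Fin p) (Fin p) ℝ} (hA : Aᵀ = A) (Q w : Fin p → ℝ) (r : ℝ) :
    w ⬝ᵥ (A - r • (A * vecMulVec Q Q * A)) *ᵥ w = w ⬝ᵥ A *ᵥ w - r * (Q ⬝ᵥ A *ᵥ w) ^ 2 := by
  have hsym : w ⬝ᵥ A *ᵥ Q = Q ⬝ᵥ A *ᵥ w := by
    rw [dotProduct_mulVec, ← mulVec_transpose, hA, dotProduct_comm]
  rw [sub_mulVec, smul_mulVec, dotProduct_sub, dotProduct_smul, ← mulVec_mulVec, ← mulVec_mulVec,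
    vecMulVec_mulVec, smul_eq_mul]
  rw [op_smul_eq_smul, mulVec_smul, dotProduct_smul, hsym, smul_eq_mul]
  ring

/-- Expansion of the quadratic form of a symmetric matrix along the line `t ↦ tQ + w`. -/
lemma line_form {p : ℕ} {A : Matrix (Fin p) (Fin p) ℝ} (hA : Aᵀ = A) (Q w : Fin p → ℝ) (t : ℝ) :
    (t • Q + w) ⬝ᵥ A *ᵥ (t • Q + w) =
      Q ⬝ᵥ A *ᵥ Q * t ^ 2 + 2 * (Q ⬝ᵥ A *ᵥ w) * t + w ⬝ᵥ A *ᵥ w := by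
  have hsym : w ⬝ᵥ A *ᵥ Q = Q ⬝ᵥ A *ᵥ w := by
    rw [dotProduct_mulVec, ← mulVec_transpose, hA, dotProduct_comm]
  simp only [mulVec_add, mulVec_smul, dotProduct_add, add_dotProduct, smul_dotProduct,
    dotProduct_smul, smul_eq_mul, hsym]
  ring

/-- Pointwise lower bound on the weight function over the half-space
`{w : QᵀΩ⁻¹w ≤ 0}`:
`∫_0^∞ φ(Qt + w; 0, Ω) dt ≥ ½ (2π)^{(1−p)/2} det(Ω)^{−1/2} a^{−1/2} exp(−½wᵀΘw)`. -/
theorem stmt_13 (p : ℕ) (Ω : Matrix (Fin p) (Fin p) ℝ) (hΩ : Ω.PosDef)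
    (Q : Fin p → ℝ) (hQ : Q ≠ 0) :
    ∀ w : Fin p → ℝ, Q ⬝ᵥ Ω⁻¹.mulVec w ≤ 0 →
      (1 / 2) * ((2 * Real.pi) ^ ((1 - (p : ℝ)) / 2) * Ω.det ^ (-(1 : ℝ) / 2) *
          (Q ⬝ᵥ Ω⁻¹.mulVec Q) ^ (-(1 : ℝ) / 2) *
          Real.exp (-(1 / 2) * (w ⬝ᵥ (Ω⁻¹ - (Q ⬝ᵥ Ω⁻¹.mulVec Q)⁻¹ •
            (Ω⁻¹ * Matrix.vecMulVec Q Q * Ω⁻¹)).mulVec w))) ≤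
        ∫ t in Set.Ioi (0 : ℝ), gaussDensity 0 Ω (t • Q + w) := by
  intro w hw
  have hsymm : (Ω⁻¹)ᵀ = Ω⁻¹ := by
    have h := hΩ.inv.isHermitian.eq
    rwa [conjTranspose_eq_transpose_of_trivial] at h
  have ha : 0 < Q ⬝ᵥ Ω⁻¹ *ᵥ Q := by
    simpa using hΩ.inv.dotProduct_mulVec_pos hQ
  have hdet := hΩ.det_pos
  simp only [gaussDensity, sub_zero, theta_form hsymm, line_form hsymm]
  generalize Q ⬝ᵥ Ω⁻¹ *ᵥ Q = a at *
  generalize Q ⬝ᵥ Ω⁻¹ *ᵥ w = b at *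
  generalize w ⬝ᵥ Ω⁻¹ *ᵥ w = c at *
  have hsq : ∀ t : ℝ, Real.exp (-(1 / 2) * (a * t ^ 2 + 2 * b * t + c)) =
      Real.exp (-(1 / 2) * (c - a⁻¹ * b ^ 2)) * Real.exp (-(a / 2) * (t - -b / a) ^ 2) := by
    intro t
    rw [← Real.exp_add]
    congr 1
    field_simp
    ring
  have hconst : (2 * Real.pi) ^ ((1 - (p : ℝ)) / 2) * a ^ (-(1 : ℝ) / 2) =
      (2 * Real.pi) ^ (-(p : ℝ) / 2) * √(2 * Real.pi / a) := by
    rw [Real.sqrt_eq_rpow, Real.div_rpow (by positivity) ha.le, neg_div 2 (1 : ℝ),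
      Real.rpow_neg ha.le, sub_div, sub_eq_add_neg, Real.rpow_add (by positivity), neg_div]
    ring
  have hhalf := half_gaussian_le ha (div_nonneg (neg_nonneg.mpr hw) ha.le)
  simp only [hsq, integral_const_mul]
  calc _ = (2 * Real.pi) ^ ((1 - (p : ℝ)) / 2) * a ^ (-(1 : ℝ) / 2) * Ω.det ^ (-(1 : ℝ) / 2) *
          Real.exp (-(1 / 2) * (c - a⁻¹ * b ^ 2)) / 2 := by ring
    _ = (2 * Real.pi) ^ (-(p : ℝ) / 2) * Ω.det ^ (-(1 : ℝ) / 2) *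
          (Real.exp (-(1 / 2) * (c - a⁻¹ * b ^ 2)) * (√(2 * Real.pi / a) / 2)) := by
        rw [hconst]; ring
    _ ≤ _ := by gcongr
end

section
/- For every r > 0 and every z ∈ ℝ^p with ‖z‖_∞ ≤ c₀·r, ∫_0^∞ exp(−½·a·t² − t·QᵀΩ⁻¹(𝕄z − r·b̄)) dt ≤ 2/(r·|QᵀΩ⁻¹b̄|). (The m = 0 case of the Proposition controlling the function 𝒜_n and its derivatives on the cube 𝒟_n = [−c₀r·1_p, c₀r·1_p] in the rare-selection regime: on this cube the linear term in the exponent satisfies QᵀΩ⁻¹(𝕄z − rb̄) ≥ r|QᵀΩ⁻¹b̄|/2 > 0.) -/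
open Matrix MeasureTheory

/-!
Write `v = 𝕄ᵀ Ω⁻¹ Q` and `B = |Qᵀ Ω⁻¹ b̄|`. By symmetry of `Ω⁻¹` the linear coefficient in the
exponent is `v ⬝ z + r B`. Cauchy–Schwarz and `‖z‖ ≤ √p c₀ r` give `|v ⬝ z| ≤ √p ‖v‖ c₀ r ≤ r B / 2`,
so this coefficient is at least `r B / 2`. Since the quadratic coefficient `Qᵀ Ω⁻¹ Q` is nonnegative,
the integrand is dominated by `exp (-(r B / 2) t)`, whose integral over `(0, ∞)` is `2 / (r B)`.
-/

/-- Cauchy–Schwarz combined with `‖z‖₂ ≤ √p ‖z‖_∞`. -/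
lemma abs_dotProduct_le_of_sup_le {p : ℕ} (v z : Fin p → ℝ) (m : ℝ) (hm : 0 ≤ m)
    (hz : ∀ i, |z i| ≤ m) :
    |v ⬝ᵥ z| ≤ Real.sqrt p * Real.sqrt (∑ i, v i ^ 2) * m := by
  have hcs : (v ⬝ᵥ z) ^ 2 ≤ (∑ i, v i ^ 2) * ∑ i, z i ^ 2 :=
    Finset.sum_mul_sq_le_sq_mul_sq _ _ _
  have hz2 : ∑ i, z i ^ 2 ≤ p * m ^ 2 := by
    calc ∑ i, z i ^ 2 ≤ ∑ _i : Fin p, m ^ 2 :=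
          Finset.sum_le_sum fun i _ => sq_le_sq' (abs_le.1 (hz i)).1 (abs_le.1 (hz i)).2
      _ = p * m ^ 2 := by simp
  have hv : 0 ≤ ∑ i, v i ^ 2 := Finset.sum_nonneg fun i _ => sq_nonneg _
  apply abs_le_of_sq_le_sq _ (by positivity)
  rw [mul_pow, mul_pow, Real.sq_sqrt (Nat.cast_nonneg p), Real.sq_sqrt hv]
  calc (v ⬝ᵥ z) ^ 2 ≤ (∑ i, v i ^ 2) * ∑ i, z i ^ 2 := hcs
    _ ≤ (∑ i, v i ^ 2) * (p * m ^ 2) := mul_le_mul_of_nonneg_left hz2 hv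
    _ = _ := by ring

/-- A nonnegative quadratic term only decreases the Laplace-type integral of `exp (-l t)`. -/
lemma integral_exp_quadratic_le {a l k : ℝ} (ha : 0 ≤ a) (hk : 0 < k) (hkl : k ≤ l) :
    (∫ t in Set.Ioi (0 : ℝ), Real.exp (-(1 / 2) * a * t ^ 2 - t * l)) ≤ 1 / k := by
  have hval : ∫ t in Set.Ioi (0 : ℝ), Real.exp (-k * t) = 1 / k := by
    rw [integral_exp_mul_Ioi (neg_lt_zero.2 hk)]
    simp
  rw [← hval]
  refine integral_mono_of_nonneg (Filter.Eventually.of_forall fun t => (Real.exp_pos _).le)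
    (integrableOn_exp_mul_Ioi (neg_lt_zero.2 hk) 0) ?_
  refine (ae_restrict_iff' measurableSet_Ioi).2 (Filter.Eventually.of_forall fun t ht => ?_)
  have ht' : (0 : ℝ) < t := ht
  apply Real.exp_le_exp.2
  have h1 : 0 ≤ a * t ^ 2 := by positivity
  have h2 : k * t ≤ l * t := mul_le_mul_of_nonneg_right hkl ht'.le
  linarith

/-- On the cube `‖z‖_∞ ≤ c₀r` (rare-selection regime),
`∫_0^∞ exp(−½at² − t·QᵀΩ⁻¹(𝕄z − rb̄)) dt ≤ 2/(r·|QᵀΩ⁻¹b̄|)`. -/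
theorem stmt_17 (p : ℕ) (Ω : Matrix (Fin p) (Fin p) ℝ) (hΩ : Ω.PosDef)
    (Q bbar : Fin p → ℝ) (hQb : Q ⬝ᵥ Ω⁻¹.mulVec bbar < 0)
    (𝕄 : Matrix (Fin p) (Fin p) ℝ)
    (c₀ : ℝ) (hc₀pos : 0 < c₀)
    (hc₀ : c₀ < |Q ⬝ᵥ Ω⁻¹.mulVec bbar| /
      (2 * Real.sqrt p * Real.sqrt (∑ i, ((𝕄ᵀ * Ω⁻¹).mulVec Q i) ^ 2))) :
    ∀ (r : ℝ), 0 < r → ∀ z : Fin p → ℝ, (∀ i, |z i| ≤ c₀ * r) →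
      (∫ t in Set.Ioi (0 : ℝ),
          Real.exp (-(1 / 2) * (Q ⬝ᵥ Ω⁻¹.mulVec Q) * t ^ 2 -
            t * (Q ⬝ᵥ Ω⁻¹.mulVec (𝕄.mulVec z - r • bbar)))) ≤
        2 / (r * |Q ⬝ᵥ Ω⁻¹.mulVec bbar|) := by
  intro r hr z hz
  have ha : 0 ≤ Q ⬝ᵥ Ω⁻¹.mulVec Q := by
    simpa using hΩ.inv.posSemidef.dotProduct_mulVec_nonneg Q
  have hsymm : (Ω⁻¹)ᵀ = Ω⁻¹ := by
    simpa [IsHermitian, conjTranspose_eq_transpose_of_trivial] using hΩ.inv.isHermitian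
  have hQM : Q ⬝ᵥ Ω⁻¹.mulVec (𝕄.mulVec z) = (𝕄ᵀ * Ω⁻¹).mulVec Q ⬝ᵥ z := by
    rw [mulVec_mulVec, dotProduct_mulVec, ← mulVec_transpose, transpose_mul, hsymm]
  have hlin : Q ⬝ᵥ Ω⁻¹.mulVec (𝕄.mulVec z - r • bbar) =
      (𝕄ᵀ * Ω⁻¹).mulVec Q ⬝ᵥ z + r * |Q ⬝ᵥ Ω⁻¹.mulVec bbar| := by
    rw [mulVec_sub, dotProduct_sub, hQM, mulVec_smul, dotProduct_smul, abs_of_neg hQb, smul_eq_mul]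
    ring
  have hcs := abs_dotProduct_le_of_sup_le ((𝕄ᵀ * Ω⁻¹).mulVec Q) z (c₀ * r) (by positivity) hz
  rw [hlin]
  have hB : 0 < |Q ⬝ᵥ Ω⁻¹.mulVec bbar| := abs_pos.2 hQb.ne
  set B := |Q ⬝ᵥ Ω⁻¹.mulVec bbar|
  set S := Real.sqrt (∑ i, ((𝕄ᵀ * Ω⁻¹).mulVec Q i) ^ 2)
  -- If the denominator vanished, the bound on `c₀` would read `c₀ < 0`.
  have hden : 0 < 2 * Real.sqrt p * S := by
    refine lt_of_le_of_ne (by positivity) fun h => ?_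
    rw [← h, div_zero] at hc₀
    exact lt_asymm hc₀ hc₀pos
  have hc : c₀ * (2 * Real.sqrt p * S) < B := (lt_div_iff₀ hden).1 hc₀
  have hbound : r * B / 2 ≤ (𝕄ᵀ * Ω⁻¹).mulVec Q ⬝ᵥ z + r * B := by
    have h1 := mul_lt_mul_of_pos_right hc hr
    have h2 := (abs_le.1 hcs).1
    linarith
  have := integral_exp_quadratic_le ha (by positivity : 0 < r * B / 2) hbound
  rwa [one_div_div] at this
end
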